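/- Let (g = ∏_{n≥0} g^(n), ∂ = ∂₀ + ∂₁) be a dg Lie algebra such that ∂₀ and ∂₁ are anticommuting square-zero derivations with ∂₀ : g^(n) → g^(n) and ∂₁ : g^(n−1) → g^(n), and the bracket respects the weight grading. Let γ = γ₀ + γ₁ + ⋯ + γₙ ∈ ∏_{k=0}^n g^(k) be a degree −1 element satisfying the equations (MC_k) for all k ≤ n, and set γ̃_{n+1} := ∂₁(γₙ) + ½ Σ_{k+l=n+1, k,l≥1} [γ_k, γ_l] ∈ g^(n+1). Then: (1) ∂^{γ₀}(γ̃_{n+1}) = 0, i.e. γ̃_{n+1} is a degree −2 cycle in (g^(n+1), ∂^{γ₀}); (2) there exists γ_{n+1} ∈ g^(n+1) such that γ₀ + γ₁ + ⋯ + γ_{n+1} satisfies the equations (MC_k) up to k = n+1 if and only if the class of γ̃_{n+1} in H_{−2}(g^(n+1), ∂^{γ₀}) vanishes. -/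

import Mathlib

/-!
# Obstruction theory for Maurer–Cartan elements

Write `F = ∂(γ) + ½[γ, γ]` for the curvature of a degree `-1` element `γ`, with components `F_m`
in weight `m`; the equation `(MC_m)` says `F_m = 0`.  Two facts give the theorem.

* The Bianchi identity `∂(F) + [γ, F] = 0` (`bianchi`), which in weight `n + 1` reads
  `∂₀(F_{n+1}) + ∂₁(F_n) + Σ_{k+l=n+1} [γ_k, F_l] = 0`.  It follows from the derivation property,
  `(∂₀ + ∂₁)² = 0` and `[γ, [γ, γ]] = 0`, the last by Jacobi since `3` is invertible.
* The formula `F_{n+1} = ∂^{γ₀}(γ_{n+1}) + γ̃_{n+1}`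
  (`WtDGLie.curv_eq_twd_add_obstruction`), where `γ̃_{n+1}` does not depend on `γ_{n+1}`.

For the cycle property, replace `γ_{n+1}` by `0`: then `F_0 = ⋯ = F_n = 0` and
`F_{n+1} = γ̃_{n+1}`, so the Bianchi identity reduces to
`∂₀(γ̃_{n+1}) + [γ₀, γ̃_{n+1}] = 0`.  For the second claim, `F_{n+1} = 0` means
`∂^{γ₀}(-γ_{n+1}) = γ̃_{n+1}`, and the equations of weight at most `n` do not involve `γ_{n+1}`.

The bigraded components are dependent types, so brackets have to be transported along equalities
of bidegrees.  All computations are therefore carried out in the direct sum `WtDGLie.Tot` of the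
components, where the inclusion of a component absorbs the transport (`WtDGLie.incl_cast`).
-/

/-!
# Common framework

Differential graded `𝕊`-modules, dg operads, dg cooperads, dg properads and dg
Lie algebras over a field `K` of characteristic `0`, together with morphisms,
quasi-isomorphisms and related constructions, used to formalize the statements
of the paper "Homotopy Batalin–Vilkovisky algebras" by Gálvez-Carrillo, Tonks
and Vallette.  All chain complexes are homologically graded: differentials
lower the degree by `1`.
-/

noncomputable section

open scoped DirectSum

/-- Transport of a graded component along an equality of degrees. -/
def degCast {K : Type} [Field K] {X : ℤ → Type} [∀ i, AddCommGroup (X i)]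
    [∀ i, Module K (X i)] {i j : ℤ} (h : i = j) : X i ≃ₗ[K] X j := by
  subst h; exact LinearEquiv.refl K _

/-- Transport of a bigraded component along equalities of weight and degree. -/
def wdegCast {K : Type} [Field K] {X : ℕ → ℤ → Type} [∀ n i, AddCommGroup (X n i)]
    [∀ n i, Module K (X n i)] {m m' : ℕ} {i j : ℤ} (hm : m = m') (h : i = j) :
    X m i ≃ₗ[K] X m' j := by
  subst hm; subst h; exact LinearEquiv.refl K _

/-- A differential graded module (chain complex) over `K`. -/
structure DGMod (K : Type) [Field K] where
  X : ℤ → Type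
  [acg : ∀ i, AddCommGroup (X i)]
  [mod : ∀ i, Module K (X i)]
  d : ∀ i, X i →ₗ[K] X (i - 1)
  d_sq : ∀ i x, d (i - 1) (d i x) = 0

attribute [instance] DGMod.acg DGMod.mod

namespace DGMod

variable {K : Type} [Field K]

/-- Cycles of a dg module in degree `i`. -/
def cycles (A : DGMod K) (i : ℤ) : Submodule K (A.X i) := LinearMap.ker (A.d i)

/-- Boundaries of a dg module in degree `i`. -/
def boundaries (A : DGMod K) (i : ℤ) : Submodule K (A.X i) :=
  LinearMap.range
    ((degCast (K := K) (X := A.X) (show i + 1 - 1 = i by omega)).toLinearMap ∘ₗ A.d (i + 1))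

/-- Homology of a dg module in degree `i`: cycles modulo boundaries. -/
abbrev homology (A : DGMod K) (i : ℤ) : Type :=
  ↥(A.cycles i) ⧸ (A.boundaries i).comap (A.cycles i).subtype

/-- The homology of a dg module, as a dg module with zero differential. -/
def homologyMod (A : DGMod K) : DGMod K where
  X i := A.homology i
  d _ := 0
  d_sq := by intro i x; simp

/-- The suspension `sA` of a dg module: `(sA)_i = A_{i-1}`. -/
def susp (A : DGMod K) : DGMod K where
  X i := A.X (i - 1)
  d i := -(A.d (i - 1))
  d_sq := by intro i x; simp [A.d_sq]

/-- Direct sum of two dg modules. -/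
def dsum (A B : DGMod K) : DGMod K where
  X i := A.X i × B.X i
  d i := (A.d i).prodMap (B.d i)
  d_sq := by
    intro i x
    simp [LinearMap.prodMap_apply, A.d_sq, B.d_sq, Prod.ext_iff]

end DGMod

/-- An isomorphism of the underlying graded modules of two dg modules. -/
def GradedModIso {K : Type} [Field K] (A B : DGMod K) : Type :=
  ∀ i, A.X i ≃ₗ[K] B.X i

/-- A homotopy equivalence of chain complexes: maps `i`, `p` and homotopies
`h`, `h'` with `Id_V − p∘i = d∘h' + h'∘d` and `Id_W − i∘p = d∘h + h∘d`. -/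
structure HtpyEquivData {K : Type} [Field K] (V W : DGMod K) where
  i : ∀ j, V.X j →ₗ[K] W.X j
  p : ∀ j, W.X j →ₗ[K] V.X j
  h : ∀ j, W.X j →ₗ[K] W.X (j + 1)
  h' : ∀ j, V.X j →ₗ[K] V.X (j + 1)
  i_chain : ∀ j x, i (j - 1) (V.d j x) = W.d j (i j x)
  p_chain : ∀ j x, p (j - 1) (W.d j x) = V.d j (p j x)
  htpyV : ∀ j x, x - p j (i j x)
      = degCast (K := K) (X := V.X) (show j + 1 - 1 = j by omega) (V.d (j + 1) (h' j x))
        + degCast (K := K) (X := V.X) (show j - 1 + 1 = j by omega) (h' (j - 1) (V.d j x))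
  htpyW : ∀ j x, x - i j (p j x)
      = degCast (K := K) (X := W.X) (show j + 1 - 1 = j by omega) (W.d (j + 1) (h j x))
        + degCast (K := K) (X := W.X) (show j - 1 + 1 = j by omega) (h (j - 1) (W.d j x))
/-- A differential graded `𝕊`-module over `K`: for each arity `n` and each
homological degree `i` a `K`-module with an action of the symmetric group `𝕊_n`
and an equivariant square-zero differential of degree `-1`. -/
structure DGSMod (K : Type) [Field K] where
  ob : ℕ → ℤ → Type
  [acg : ∀ n i, AddCommGroup (ob n i)]
  [mod : ∀ n i, Module K (ob n i)]
  act : ∀ n i, Equiv.Perm (Fin n) → (ob n i →ₗ[K] ob n i)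
  act_one : ∀ n i x, act n i 1 x = x
  act_mul : ∀ n i σ τ x, act n i (σ * τ) x = act n i σ (act n i τ x)
  d : ∀ n i, ob n i →ₗ[K] ob n (i - 1)
  d_sq : ∀ n i x, d n (i - 1) (d n i x) = 0
  d_act : ∀ n i σ x, d n i (act n i σ x) = act n (i - 1) σ (d n i x)

attribute [instance] DGSMod.acg DGSMod.mod

namespace DGSMod

variable {K : Type} [Field K]

/-- `x` is a boundary of the dg `𝕊`-module `M`. -/
def IsBoundary (M : DGSMod K) (n : ℕ) (i : ℤ) (x : M.ob n i) : Prop :=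
  ∃ y : M.ob n (i + 1),
    degCast (K := K) (X := fun j => M.ob n j) (show i + 1 - 1 = i by omega)
      (M.d n (i + 1) y) = x

end DGSMod

/-- A morphism of dg `𝕊`-modules. -/
structure DGSModHom {K : Type} [Field K] (M N : DGSMod K) where
  f : ∀ n i, M.ob n i →ₗ[K] N.ob n i
  comm_d : ∀ n i x, f n (i - 1) (M.d n i x) = N.d n i (f n i x)
  comm_act : ∀ n i σ x, f n i (M.act n i σ x) = N.act n i σ (f n i x)

/-- A morphism of dg `𝕊`-modules is a quasi-isomorphism if it induces an
isomorphism on homology in each arity and degree. -/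
def DGSModHom.IsQuasiIso {K : Type} [Field K] {M N : DGSMod K} (φ : DGSModHom M N) : Prop :=
  ∀ n i,
    (∀ y : N.ob n i, N.d n i y = 0 →
      ∃ x : M.ob n i, M.d n i x = 0 ∧ N.IsBoundary n i (φ.f n i x - y)) ∧
    (∀ x : M.ob n i, M.d n i x = 0 → N.IsBoundary n i (φ.f n i x) → M.IsBoundary n i x)

/-- An isomorphism of the underlying degree-graded `𝕊`-modules (equivariant
family of linear isomorphisms, not required to commute with differentials). -/
structure GradedSModIso {K : Type} [Field K] (M N : DGSMod K) where
  e : ∀ n i, M.ob n i ≃ₗ[K] N.ob n i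
  comm_act : ∀ n i σ x, e n i (M.act n i σ x) = N.act n i σ (e n i x)

/-- A differential graded operad over `K`: a dg `𝕊`-module together with a unit
and partial composition products `∘ᵢ` (the usual associativity, unitality and
equivariance axioms of the partial compositions, and the Leibniz rule for the
differential, are understood and not repeated here). -/
structure DGOperad (K : Type) [Field K] where
  ob : ℕ → ℤ → Type
  [acg : ∀ n i, AddCommGroup (ob n i)]
  [mod : ∀ n i, Module K (ob n i)]
  act : ∀ n i, Equiv.Perm (Fin n) → (ob n i →ₗ[K] ob n i)
  act_one : ∀ n i x, act n i 1 x = x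
  act_mul : ∀ n i σ τ x, act n i (σ * τ) x = act n i σ (act n i τ x)
  d : ∀ n i, ob n i →ₗ[K] ob n (i - 1)
  d_sq : ∀ n i x, d n (i - 1) (d n i x) = 0
  d_act : ∀ n i σ x, d n i (act n i σ x) = act n (i - 1) σ (d n i x)
  unit : ob 1 0
  comp : ∀ (m n : ℕ), Fin m → ∀ (p q : ℤ), ob m p →ₗ[K] ob n q →ₗ[K] ob (m + n - 1) (p + q)

attribute [instance] DGOperad.acg DGOperad.mod

namespace DGOperad

variable {K : Type} [Field K]

/-- The underlying dg `𝕊`-module of a dg operad. -/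
def toDGSMod (P : DGOperad K) : DGSMod K where
  ob := P.ob
  acg := P.acg
  mod := P.mod
  act := P.act
  act_one := P.act_one
  act_mul := P.act_mul
  d := P.d
  d_sq := P.d_sq
  d_act := P.d_act

/-- `x` is a boundary of the dg operad `P`. -/
def IsBoundary (P : DGOperad K) (n : ℕ) (i : ℤ) (x : P.ob n i) : Prop :=
  ∃ y : P.ob n (i + 1),
    degCast (K := K) (X := fun j => P.ob n j) (show i + 1 - 1 = i by omega)
      (P.d n (i + 1) y) = x

end DGOperad

/-- A morphism of dg operads. -/
structure DGOperadHom {K : Type} [Field K] (P Q : DGOperad K) where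
  f : ∀ n i, P.ob n i →ₗ[K] Q.ob n i
  comm_d : ∀ n i x, f n (i - 1) (P.d n i x) = Q.d n i (f n i x)
  comm_act : ∀ n i σ x, f n i (P.act n i σ x) = Q.act n i σ (f n i x)
  comm_unit : f 1 0 P.unit = Q.unit
  comm_comp : ∀ m n (k : Fin m) p q x y,
    f (m + n - 1) (p + q) (P.comp m n k p q x y) = Q.comp m n k p q (f m p x) (f n q y)

namespace DGOperadHom

variable {K : Type} [Field K]

/-- Composition of morphisms of dg operads. -/
def comp {P Q R : DGOperad K} (ψ : DGOperadHom Q R) (φ : DGOperadHom P Q) :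
    DGOperadHom P R where
  f n i := (ψ.f n i).comp (φ.f n i)
  comm_d := by intro n i x; simp [φ.comm_d, ψ.comm_d]
  comm_act := by intro n i σ x; simp [φ.comm_act, ψ.comm_act]
  comm_unit := by simp [φ.comm_unit, ψ.comm_unit]
  comm_comp := by intro m n k p q x y; simp [φ.comm_comp, ψ.comm_comp]

/-- A morphism of dg operads is a quasi-isomorphism if it induces an isomorphism
on homology in every arity and degree. -/
def IsQuasiIso {P Q : DGOperad K} (φ : DGOperadHom P Q) : Prop :=
  ∀ n i,
    (∀ y : Q.ob n i, Q.d n i y = 0 →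
      ∃ x : P.ob n i, P.d n i x = 0 ∧ Q.IsBoundary n i (φ.f n i x - y)) ∧
    (∀ x : P.ob n i, P.d n i x = 0 → Q.IsBoundary n i (φ.f n i x) → P.IsBoundary n i x)

end DGOperadHom
/-- A differential graded cooperad over `K`: a dg `𝕊`-module together with the
(componentwise) partial decomposition maps `Δ₍₁₎` (the coassociativity,
counitality and equivariance axioms of the decomposition maps are understood
and not repeated here). -/
structure DGCooperad (K : Type) [Field K] where
  ob : ℕ → ℤ → Type
  [acg : ∀ n i, AddCommGroup (ob n i)]
  [mod : ∀ n i, Module K (ob n i)]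
  act : ∀ n i, Equiv.Perm (Fin n) → (ob n i →ₗ[K] ob n i)
  act_one : ∀ n i x, act n i 1 x = x
  act_mul : ∀ n i σ τ x, act n i (σ * τ) x = act n i σ (act n i τ x)
  d : ∀ n i, ob n i →ₗ[K] ob n (i - 1)
  d_sq : ∀ n i x, d n (i - 1) (d n i x) = 0
  d_act : ∀ n i σ x, d n i (act n i σ x) = act n (i - 1) σ (d n i x)
  decomp : ∀ (m n : ℕ), Fin m → ∀ (p q : ℤ),
    ob (m + n - 1) (p + q) →ₗ[K] TensorProduct K (ob m p) (ob n q)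

attribute [instance] DGCooperad.acg DGCooperad.mod

namespace DGCooperad

variable {K : Type} [Field K]

/-- The underlying dg `𝕊`-module of a dg cooperad. -/
def toDGSMod (C : DGCooperad K) : DGSMod K where
  ob := C.ob
  acg := C.acg
  mod := C.mod
  act := C.act
  act_one := C.act_one
  act_mul := C.act_mul
  d := C.d
  d_sq := C.d_sq
  d_act := C.d_act

/-- A family of degree `-1` maps is a *coderivation* of the cooperad `C` if it
satisfies the co-Leibniz rule against all the partial decomposition maps. -/
def IsCoderivation (C : DGCooperad K) (D : ∀ n i, C.ob n i →ₗ[K] C.ob n (i - 1)) : Prop :=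
  ∀ (m n : ℕ) (k : Fin m) (p q : ℤ) (x : C.ob (m + n - 1) (p + q + 1)),
    C.decomp m n k p q
        (degCast (K := K) (X := fun j => C.ob (m + n - 1) j)
          (show p + q + 1 - 1 = p + q by omega) (D (m + n - 1) (p + q + 1) x))
      = TensorProduct.map
          ((degCast (K := K) (X := fun j => C.ob m j)
            (show p + 1 - 1 = p by omega)).toLinearMap ∘ₗ D m (p + 1)) LinearMap.id
          (C.decomp m n k (p + 1) q
            (degCast (K := K) (X := fun j => C.ob (m + n - 1) j)
              (show p + q + 1 = p + 1 + q by omega) x))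
        + ((-1 : K) ^ p) •
          TensorProduct.map LinearMap.id
            ((degCast (K := K) (X := fun j => C.ob n j)
              (show q + 1 - 1 = q by omega)).toLinearMap ∘ₗ D n (q + 1))
            (C.decomp m n k p (q + 1)
              (degCast (K := K) (X := fun j => C.ob (m + n - 1) j)
                (show p + q + 1 = p + (q + 1) by omega) x))

end DGCooperad

/-- A morphism of dg cooperads. -/
structure DGCooperadHom {K : Type} [Field K] (C D : DGCooperad K) where
  f : ∀ n i, C.ob n i →ₗ[K] D.ob n i
  comm_d : ∀ n i x, f n (i - 1) (C.d n i x) = D.d n i (f n i x)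
  comm_act : ∀ n i σ x, f n i (C.act n i σ x) = D.act n i σ (f n i x)
  comm_decomp : ∀ m n (k : Fin m) p q x,
    TensorProduct.map (f m p) (f n q) (C.decomp m n k p q x)
      = D.decomp m n k p q (f (m + n - 1) (p + q) x)

/-- Composition of morphisms of dg cooperads. -/
def DGCooperadHom.comp {K : Type} [Field K] {C D E : DGCooperad K}
    (ψ : DGCooperadHom D E) (φ : DGCooperadHom C D) : DGCooperadHom C E where
  f n i := (ψ.f n i).comp (φ.f n i)
  comm_d := by intro n i x; simp [φ.comm_d, ψ.comm_d]
  comm_act := by intro n i σ x; simp [φ.comm_act, ψ.comm_act]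
  comm_decomp := by
    intro m n k p q x
    have h : TensorProduct.map ((ψ.f m p).comp (φ.f m p)) ((ψ.f n q).comp (φ.f n q))
        = (TensorProduct.map (ψ.f m p) (ψ.f n q)).comp
            (TensorProduct.map (φ.f m p) (φ.f n q)) :=
      TensorProduct.map_comp _ _ _ _
    simp only [h, LinearMap.comp_apply, φ.comm_decomp, ψ.comm_decomp]
/-- A differential graded properad over `K` (underlying dg `𝕊`-bimodule; the
properadic composition products along connected graphs and their axioms are
understood and not repeated here).  `ob m n i` has `m` outputs, `n` inputs and
homological degree `i`. -/
structure DGProperad (K : Type) [Field K] where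
  ob : ℕ → ℕ → ℤ → Type
  [acg : ∀ m n i, AddCommGroup (ob m n i)]
  [mod : ∀ m n i, Module K (ob m n i)]
  actL : ∀ m n i, Equiv.Perm (Fin m) → (ob m n i →ₗ[K] ob m n i)
  actR : ∀ m n i, Equiv.Perm (Fin n) → (ob m n i →ₗ[K] ob m n i)
  d : ∀ m n i, ob m n i →ₗ[K] ob m n (i - 1)
  d_sq : ∀ m n i x, d m n (i - 1) (d m n i x) = 0

attribute [instance] DGProperad.acg DGProperad.mod

/-- `x` is a boundary of the dg properad `P`. -/
def DGProperad.IsBoundary {K : Type} [Field K] (P : DGProperad K) (m n : ℕ) (i : ℤ)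
    (x : P.ob m n i) : Prop :=
  ∃ y : P.ob m n (i + 1),
    degCast (K := K) (X := fun j => P.ob m n j) (show i + 1 - 1 = i by omega)
      (P.d m n (i + 1) y) = x

/-- A morphism of dg properads. -/
structure DGProperadHom {K : Type} [Field K] (P Q : DGProperad K) where
  f : ∀ m n i, P.ob m n i →ₗ[K] Q.ob m n i
  comm_d : ∀ m n i x, f m n (i - 1) (P.d m n i x) = Q.d m n i (f m n i x)
  comm_actL : ∀ m n i σ x, f m n i (P.actL m n i σ x) = Q.actL m n i σ (f m n i x)
  comm_actR : ∀ m n i σ x, f m n i (P.actR m n i σ x) = Q.actR m n i σ (f m n i x)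

/-- A morphism of dg properads is a quasi-isomorphism if it induces an
isomorphism on homology in every pair of arities and every degree. -/
def DGProperadHom.IsQuasiIso {K : Type} [Field K] {P Q : DGProperad K}
    (φ : DGProperadHom P Q) : Prop :=
  ∀ m n i,
    (∀ y : Q.ob m n i, Q.d m n i y = 0 →
      ∃ x : P.ob m n i, P.d m n i x = 0 ∧ Q.IsBoundary m n i (φ.f m n i x - y)) ∧
    (∀ x : P.ob m n i, P.d m n i x = 0 →
      Q.IsBoundary m n i (φ.f m n i x) → P.IsBoundary m n i x)

/-- An isomorphism of the underlying graded `𝕊`-bimodules of two dg properads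
(preserving the homological degree, not required to preserve differentials). -/
structure GradedSBimodIso {K : Type} [Field K] (P Q : DGProperad K) where
  e : ∀ m n i, P.ob m n i ≃ₗ[K] Q.ob m n i
  comm_actL : ∀ m n i σ x, e m n i (P.actL m n i σ x) = Q.actL m n i σ (e m n i x)
  comm_actR : ∀ m n i σ x, e m n i (P.actR m n i σ x) = Q.actR m n i σ (e m n i x)

/-- A differential graded Lie algebra over `K` (with homological grading; the
bracket has degree `0`). -/
structure DGLieAlg (K : Type) [Field K] where
  X : ℤ → Type
  [acg : ∀ i, AddCommGroup (X i)]
  [mod : ∀ i, Module K (X i)]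
  d : ∀ i, X i →ₗ[K] X (i - 1)
  d_sq : ∀ i x, d (i - 1) (d i x) = 0
  br : ∀ p q, X p →ₗ[K] X q →ₗ[K] X (p + q)
  antisymm : ∀ p q x y,
    br p q x y = -((-1 : K) ^ (p * q)) • degCast (K := K) (X := X) (add_comm q p) (br q p y x)
  jacobi : ∀ a b c x y z,
    br a (b + c) x (br b c y z)
      = degCast (K := K) (X := X) (by ring) (br (a + b) c (br a b x y) z)
        + (-1 : K) ^ (a * b) • degCast (K := K) (X := X) (by ring) (br b (a + c) y (br a c x z))
  leibniz : ∀ p q x y,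
    d (p + q) (br p q x y)
      = degCast (K := K) (X := X) (by ring) (br (p - 1) q (d p x) y)
        + (-1 : K) ^ p • degCast (K := K) (X := X) (by ring) (br p (q - 1) x (d q y))

attribute [instance] DGLieAlg.acg DGLieAlg.mod

namespace DGLieAlg

variable {K : Type} [Field K]

/-- The differential `∂^{γ₀} = ∂ + [γ₀, −]` twisted by a degree `-1` element. -/
def twisted (L : DGLieAlg K) (γ₀ : L.X (-1)) (i : ℤ) (x : L.X i) : L.X (i - 1) :=
  L.d i x + degCast (K := K) (X := L.X) (show -1 + i = i - 1 by omega) (L.br (-1) i γ₀ x)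

/-- The Maurer–Cartan equation `∂(γ) + ½[γ, γ] = 0` for a degree `-1` element. -/
def IsMaurerCartan (L : DGLieAlg K) (γ : L.X (-1)) : Prop :=
  degCast (K := K) (X := L.X) (show (-1 : ℤ) - 1 = -2 by omega) (L.d (-1) γ)
    + (2⁻¹ : K) • degCast (K := K) (X := L.X) (show (-1 : ℤ) + -1 = -2 by omega)
        (L.br (-1) (-1) γ γ) = 0

end DGLieAlg
/-- A weight-graded dg Lie algebra `g = ∏_{n≥0} g^{(n)}` whose differential is a
sum `∂ = ∂₀ + ∂₁` of two anticommuting square-zero derivations, with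
`∂₀ : g^{(n)} → g^{(n)}` and `∂₁ : g^{(n-1)} → g^{(n)}`, and whose Lie bracket
respects the weight grading. -/
structure WtDGLie (K : Type) [Field K] where
  X : ℕ → ℤ → Type
  [acg : ∀ n i, AddCommGroup (X n i)]
  [mod : ∀ n i, Module K (X n i)]
  d0 : ∀ n i, X n i →ₗ[K] X n (i - 1)
  d1 : ∀ n i, X n i →ₗ[K] X (n + 1) (i - 1)
  br : ∀ m n p q, X m p →ₗ[K] X n q →ₗ[K] X (m + n) (p + q)
  d0_sq : ∀ n i x, d0 n (i - 1) (d0 n i x) = 0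
  d1_sq : ∀ n i x, d1 (n + 1) (i - 1) (d1 n i x) = 0
  d0_d1 : ∀ n i x, d0 (n + 1) (i - 1) (d1 n i x) + d1 n (i - 1) (d0 n i x) = 0
  antisymm : ∀ m n p q x y,
    br m n p q x y
      = -((-1 : K) ^ (p * q)) •
          wdegCast (K := K) (X := X) (Nat.add_comm n m) (add_comm q p) (br n m q p y x)
  jacobi : ∀ a b c p q r x y z,
    br a (b + c) p (q + r) x (br b c q r y z)
      = wdegCast (K := K) (X := X) (by omega) (by ring) (br (a + b) c (p + q) r (br a b p q x y) z)
        + (-1 : K) ^ (p * q) •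
            wdegCast (K := K) (X := X) (by omega) (by ring)
              (br b (a + c) q (p + r) y (br a c p r x z))
  leibniz0 : ∀ m n p q x y,
    d0 (m + n) (p + q) (br m n p q x y)
      = wdegCast (K := K) (X := X) rfl (by ring) (br m n (p - 1) q (d0 m p x) y)
        + (-1 : K) ^ p •
            wdegCast (K := K) (X := X) rfl (by ring) (br m n p (q - 1) x (d0 n q y))
  leibniz1 : ∀ m n p q x y,
    d1 (m + n) (p + q) (br m n p q x y)
      = wdegCast (K := K) (X := X) (by omega) (by ring) (br (m + 1) n (p - 1) q (d1 m p x) y)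
        + (-1 : K) ^ p •
            wdegCast (K := K) (X := X) (by omega) (by ring) (br m (n + 1) p (q - 1) x (d1 n q y))

attribute [instance] WtDGLie.acg WtDGLie.mod

namespace WtDGLie

variable {K : Type} [Field K]

/-- The Maurer–Cartan equation `(MC₀)`: `∂₀(γ₀) + ½[γ₀, γ₀] = 0` in `g^{(0)}`. -/
def MCzero (L : WtDGLie K) (γ : ∀ k, L.X k (-1)) : Prop :=
  wdegCast (K := K) (X := L.X) rfl (show (-1 : ℤ) - 1 = -2 by omega) (L.d0 0 (-1) (γ 0))
    + (2⁻¹ : K) • wdegCast (K := K) (X := L.X) (by omega) (show (-1 : ℤ) + -1 = -2 by omega)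
        (L.br 0 0 (-1) (-1) (γ 0) (γ 0)) = 0

/-- The Maurer–Cartan equation `(MC_{m+1})`:
`∂₀(γ_{m+1}) + ∂₁(γ_m) + ½ Σ_{k+l=m+1} [γ_k, γ_l] = 0` in `g^{(m+1)}`. -/
def MCsucc (L : WtDGLie K) (γ : ∀ k, L.X k (-1)) (m : ℕ) : Prop :=
  wdegCast (K := K) (X := L.X) rfl (show (-1 : ℤ) - 1 = -2 by omega)
      (L.d0 (m + 1) (-1) (γ (m + 1)))
    + wdegCast (K := K) (X := L.X) rfl (show (-1 : ℤ) - 1 = -2 by omega)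
        (L.d1 m (-1) (γ m))
    + (2⁻¹ : K) •
        ∑ k ∈ (Finset.range (m + 2)).attach,
          wdegCast (K := K) (X := L.X)
            (show (k : ℕ) + (m + 1 - (k : ℕ)) = m + 1 by
              have := Finset.mem_range.mp k.2; omega)
            (show (-1 : ℤ) + -1 = -2 by omega)
            (L.br (k : ℕ) (m + 1 - (k : ℕ)) (-1) (-1) (γ (k : ℕ)) (γ (m + 1 - (k : ℕ))))
    = 0

/-- The obstruction `γ̃_{n+1} := ∂₁(γ_n) + ½ Σ_{k+l=n+1, k,l≥1} [γ_k, γ_l]`. -/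
def obstruction (L : WtDGLie K) (γ : ∀ k, L.X k (-1)) (n : ℕ) : L.X (n + 1) (-2) :=
  wdegCast (K := K) (X := L.X) rfl (show (-1 : ℤ) - 1 = -2 by omega) (L.d1 n (-1) (γ n))
    + (2⁻¹ : K) •
        ∑ k ∈ (Finset.Icc 1 n).attach,
          wdegCast (K := K) (X := L.X)
            (show (k : ℕ) + (n + 1 - (k : ℕ)) = n + 1 by
              have := Finset.mem_Icc.mp k.2; omega)
            (show (-1 : ℤ) + -1 = -2 by omega)
            (L.br (k : ℕ) (n + 1 - (k : ℕ)) (-1) (-1) (γ (k : ℕ)) (γ (n + 1 - (k : ℕ))))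

/-- The differential `∂^{γ₀} := ∂₀ + [γ₀, −]` twisted by a Maurer–Cartan element
of `(g^{(0)}, ∂₀)`; it preserves the weight grading. -/
def twd (L : WtDGLie K) (γ₀ : L.X 0 (-1)) (n : ℕ) (i : ℤ) (x : L.X n i) :
    L.X n (i - 1) :=
  L.d0 n i x
    + wdegCast (K := K) (X := L.X) (show 0 + n = n by omega) (show -1 + i = i - 1 by omega)
        (L.br 0 n (-1) i γ₀ x)

end WtDGLie
/-- Environment packaging the operads, cooperads and constructions from the
paper "Homotopy Batalin–Vilkovisky algebras".  Each field is documented by the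
object it stands for; the defining presentations (generators, relations,
weight gradings, bar/cobar constructions, …) which are not formalized here are
recorded in the docstrings. -/
structure PaperEnv (K : Type) [Field K] where
  /-- The operad `BV = F(V)/(R)` of Batalin–Vilkovisky algebras: generators a
  symmetric binary product `•` of degree `0`, a symmetric binary bracket `⟨,⟩`
  of degree `1` and a unary operator `Δ` of degree `1`; relations:
  associativity of `•`, Jacobi for `⟨,⟩`, Leibniz between `•` and `⟨,⟩`,
  `Δ² = 0`, `⟨-,-⟩ = Δ(-•-) − (Δ-)•- − -•(Δ-)` and the derivation relation of
  `Δ` with respect to `⟨,⟩`. -/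
  BV : DGOperad K
  /-- The quadratic analogue `qBV = F(V)/(qR)`, where `qR` is the quadratic
  part of the space of relations `R`. -/
  qBV : DGOperad K
  /-- The graded operad `gr BV` associated to the filtration of `BV` by the
  number of generators. -/
  grBV : DGOperad K
  /-- The (Koszul) operad `G` of Gerstenhaber algebras. -/
  G : DGOperad K
  /-- The operad `Com` of commutative algebras. -/
  Com : DGOperad K
  /-- The operad `Lie₁` of Lie algebra structures on the suspension of a dg
  module. -/
  Lie1 : DGOperad K
  /-- The algebra of dual numbers `D = K[Δ]/(Δ²)`, with `Δ` of homological
  degree `1`, viewed as an operad concentrated in arity `1`. -/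
  Dual : DGOperad K
  /-- The Gerstenhaber–Voronov operad `GV` of the cup product and the brace
  operations. -/
  GV : DGOperad K
  /-- The dg operad `C_•(fD)` of singular chains on the framed little discs
  operad. -/
  CfD : DGOperad K
  /-- The graded operad `H_•(fD)`, homology of the framed little discs operad
  (with zero differential). -/
  HfD : DGOperad K
  /-- The dg operad `C_•(R)` of singular chains on the operad of genus `0`
  Riemann spheres with one output. -/
  CR : DGOperad K
  /-- The Koszul dual cooperad `qBV^¡` of `qBV` (zero internal differential). -/
  qBVdual : DGCooperad K
  /-- The Koszul dual dg cooperad `BV^¡ = (qBV^¡, d_φ)` of `BV`. -/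
  BVdual : DGCooperad K
  /-- The Koszul dual cooperad `G^¡` of the Gerstenhaber operad. -/
  Gdual : DGCooperad K
  /-- The Koszul dual cooperad `Com^¡`. -/
  ComDual : DGCooperad K
  /-- The Koszul dual cooperad `Lie₁^¡`. -/
  Lie1Dual : DGCooperad K
  /-- `K[δ] ≅ T^c(δ) = D^¡`: the cofree coassociative coalgebra on one generator
  `δ` of homological degree `2`, as an `𝕊`-module concentrated in arity `1`. -/
  Kdelta : DGSMod K
  /-- The cooperad `SᶜCom₁ᶜ` (operadic suspension of the cooperad of
  cocommutative coalgebras on a suspension), as a dg `𝕊`-module. -/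
  SCom1 : DGSMod K
  /-- The cooperad `SᶜLieᶜ` (operadic suspension of the cooperad of Lie
  coalgebras), as a dg `𝕊`-module. -/
  SLie : DGSMod K
  /-- The cobar construction `BV∞ := Ω BV^¡`, i.e. the quasi-free operad
  `(F(s⁻¹ q̄BV^¡), d = d₁ + d₂)`. -/
  BVinf : DGOperad K
  /-- The cobar construction `G∞ := Ω G^¡`. -/
  Ginf : DGOperad K
  /-- The cobar construction `qBV∞ := Ω qBV^¡`. -/
  qBVinf : DGOperad K
  /-- The canonical morphism of dg operads `Ω BV^¡ → BV`. -/
  resBV : DGOperadHom BVinf BV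
  /-- The canonical morphism of dg operads `Ω G^¡ → G`. -/
  resG : DGOperadHom Ginf G
  /-- The canonical morphism of dg operads `Ω qBV^¡ → qBV`. -/
  resqBV : DGOperadHom qBVinf qBV
  /-- The natural epimorphism of bigraded operads `qBV ↠ gr BV`. -/
  qBVtoGr : DGOperadHom qBV grBV
  qBVtoGr_surjective : ∀ n i, Function.Surjective (qBVtoGr.f n i)
  /-- The weight grading of `qBV` (by the number of generators). -/
  qBVwt : ℕ → ∀ n i, Submodule K (qBV.ob n i)
  /-- The weight grading of `gr BV`. -/
  grBVwt : ℕ → ∀ n i, Submodule K (grBV.ob n i)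
  /-- `qBV ↠ gr BV` preserves the weight grading. -/
  qBVtoGr_wt : ∀ w n i x, x ∈ qBVwt w n i → qBVtoGr.f n i x ∈ grBVwt w n i
  /-- The standard isomorphism `gr BV ≅ BV` of degree-graded `𝕊`-modules. -/
  grIso : GradedSModIso grBV.toDGSMod BV.toDGSMod
  /-- The composite (plethysm) product `∘` of `𝕊`-modules. -/
  comp : DGSMod K → DGSMod K → DGSMod K
  /-- The morphism of `𝕊`-modules `D∘G → G∘D` determined by the distributive
  laws sending `Δ∘(-•-)` to `(Δ-)•- + -•(Δ-)` and `Δ∘⟨-,-⟩` to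
  `⟨Δ-,-⟩ + ⟨-,Δ-⟩`. -/
  distribMap : DGSModHom (comp Dual.toDGSMod G.toDGSMod) (comp G.toDGSMod Dual.toDGSMod)
  /-- The predicate "`P` is a Koszul operad", in the classical sense of
  Ginzburg–Kapranov and Getzler–Jones for (weight-graded) quadratic operads. -/
  IsKoszul : DGOperad K → Prop
  /-- `Concentrated M deg` : under the identification of `M` with the composite
  `K[δ] ∘ SᶜCom₁ᶜ ∘ SᶜLieᶜ`, the component
  `K·δ^d ⊗ SᶜCom₁ᶜ(t) ⊗ SᶜLieᶜ(p₁) ⊗ ⋯ ⊗ SᶜLieᶜ(p_t)` is concentrated in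
  homological degree `deg d t (p₁,…,p_t)`. -/
  Concentrated : DGSMod K → ((d : ℕ) → (t : ℕ) → (Fin t → ℕ) → ℤ) → Prop
  /-- A comparison morphism `C_•(fD) → H_•(fD)` of dg operads (it exists by
  the formality of the framed little discs operad, Ševera and
  Giansiracusa–Salvatore). -/
  projfD : DGOperadHom CfD HfD
  /-- Getzler's isomorphism of operads `H_•(fD) ≅ BV`. -/
  getzler : DGOperadHom HfD BV
  getzler_bijective : ∀ n i, Function.Bijective (getzler.f n i)
  /-- The map `C_•(fD) → C_•(R)` induced by the inclusion of the framed little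
  discs operad as a deformation retract of the Riemann sphere operad. -/
  crIncl : DGOperadHom CfD CR
  /-- The map `C_•(R) → C_•(fD)` induced by the retraction (shrinking the
  complement of the output disc). -/
  crRetr : DGOperadHom CR CfD
  crIncl_qiso : crIncl.IsQuasiIso
  crRetr_qiso : crRetr.IsQuasiIso
  /-- Equality of morphisms of dg operads in the homotopy category of dg
  operads. -/
  EqHo : ∀ {P Q : DGOperad K}, DGOperadHom P Q → DGOperadHom P Q → Prop
  /-- The endomorphism dg operad `End_A` of a dg module `A`. -/
  EndOp : DGMod K → DGOperad K
  /-- `Lifts γ β` : the homotopy algebra structure `γ` on the dg module `A`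
  lifts the algebra structure `β` on the homology of `A`, i.e. the structure
  induced by `γ` on homology agrees with `β` (under `H(P) ≅ Q`). -/
  Lifts : ∀ {A : DGMod K} {P Q : DGOperad K},
    DGOperadHom P (EndOp A) → DGOperadHom Q (EndOp A.homologyMod) → Prop
  /-- Getzler's BV-algebra structure on the homology of an algebra over the
  chains of the Riemann sphere operad (in particular, of a TCFT). -/
  getzlerTCFT : ∀ {A : DGMod K}, DGOperadHom CR (EndOp A) →
    DGOperadHom BV (EndOp A.homologyMod)
  /-- The free `P`-algebra functor `X ↦ P(X) = ⊕ₙ P(n) ⊗_{𝕊ₙ} X^{⊗n}`. -/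
  freeAlg : DGOperad K → DGMod K → DGMod K
  /-- The generator `•` (the commutative product) of `qBV`. -/
  qbvMul : qBV.ob 2 0
  /-- The generator `⟨,⟩` (the symmetric bracket of degree `1`) of `qBV`. -/
  qbvBr : qBV.ob 2 1
  /-- The generator `Δ` of `qBV`. -/
  qbvDelta : qBV.ob 1 1
  /-- The convolution dg Lie algebra `Hom_𝕊(C, Q)` of a dg cooperad `C` and a
  dg operad `Q`. -/
  conv : DGCooperad K → DGOperad K → DGLieAlg K
/-- Framework for the explicit operations of homotopy Gerstenhaber and homotopy
Batalin–Vilkovisky algebras on a dg module `A`.  Here `sA` is the suspension of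
`A` and, for `t ≥ 1` and `p : Fin t → ℕ`, `W t p i` denotes the homological
degree `i` component of the wedge
`(sA)^{⊗p₀}-bar ∧ ⋯ ∧ (sA)^{⊗p_{t-1}}-bar`,
where `(sA)^{⊗p}-bar` is the quotient of `(sA)^{⊗p}` by the images of the
shuffle maps `sh_{i,p-i}` (by Ree's theorem, `Lieᶜ(sA) = ⊕_p (sA)^{⊗p}-bar` is
the cofree Lie coalgebra), so that
`G^¡(A) ≅ ⊕ s^{t-2} W t p` and `BV^¡(A) ≅ ⊕ s^{2d+t-2} W t p`.
The fields `sextd`, `quadApply`, `linApply` and `mtilde` package the straight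
shuffle extension and the resulting (co)derivation formulas, as documented
below. -/
structure BarWedgeSetup (K : Type) [Field K] where
  /-- the underlying dg module -/
  A : DGMod K
  /-- the suspension `sA` of `A` -/
  sA : DGMod K
  /-- the suspension isomorphism `A_i ≅ (sA)_{i+1}` -/
  susp : ∀ i, A.X i ≃ₗ[K] sA.X (i + 1)
  susp_d : ∀ i x,
    degCast (K := K) (X := sA.X) (show i + 1 - 1 = i - 1 + 1 by omega)
        (sA.d (i + 1) (susp i x))
      = - susp (i - 1) (A.d i x)
  /-- the degree-`i` part of `(sA)^{⊗p₀}-bar ∧ ⋯ ∧ (sA)^{⊗p_{t-1}}-bar` -/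
  W : (t : ℕ) → (Fin t → ℕ) → ℤ → Type
  [Wacg : ∀ t p i, AddCommGroup (W t p i)]
  [Wmod : ∀ t p i, Module K (W t p i)]
  /-- `(sA)^{⊗1}-bar = sA` -/
  W1 : ∀ i, W 1 (fun _ => 1) i ≃ₗ[K] sA.X i
  /-- the class of a pure tensor `a₁ ⊗ ⋯ ⊗ a_p` in `(sA)^{⊗p}-bar` -/
  tensorOf : ∀ (p : ℕ) (dg : Fin p → ℤ), (∀ k, sA.X (dg k)) → W 1 (fun _ => p) (∑ k, dg k)
  /-- the wedge `w₁ ∧ ⋯ ∧ w_t` of a family of bar classes -/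
  wedgeOf : ∀ (t : ℕ) (p : Fin t → ℕ) (dg : Fin t → ℤ),
    (∀ k, W 1 (fun _ => p k) (dg k)) → W t p (∑ k, dg k)
  /-- The straight shuffle extension `Σ_q m^{p₁,…,p_t}_{q₁,…,q_t}` of a family
  `m = (m_{q₁,…,q_t})` of maps of degree `t − 2 + c`: the signed sum, over all
  straight `(q,p)`-shuffles σ (shuffles preserving the order of each of the `t`
  strings and keeping each distinguished interval of length `q_k` contiguous
  and unpermuted), of the terms obtained by applying `m_{q₁,…,q_t}` to the
  distinguished intervals and shuffling the remaining factors around the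
  result; `p₀ = 1 + Σ(p_k − q_k)` indexes the output bar-length component. -/
  sextd : ∀ (c : ℤ),
    (∀ (t : ℕ) (p : Fin t → ℕ) (i : ℤ), W t p i → sA.X (i + t - 2 + c)) →
    ∀ (t : ℕ) (p : Fin t → ℕ) (p₀ : ℕ) (i : ℤ), W t p i → W 1 (fun _ => p₀) (i + t - 2 + c)
  /-- The quadratic composition
  `Σ_{I⊔J={1,…,t}, I≠∅} (−1)^{ε+ε′+ε″} outer( ext(w_{i₁}∧⋯∧w_{i_r}) ∧ w_{j₁}∧⋯∧w_{j_{t−r}} )`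
  of an `outer` family of operations against an extension family `ext`
  evaluated on the wedge `w₁ ∧ ⋯ ∧ w_t`, where `(−1)^{ε+ε′}` is the shifted
  Koszul sign of the reordering of the `w_k` and `ε″ = r(t−r)`. -/
  quadApply : ∀ (c c' : ℤ),
    (∀ (t' : ℕ) (p' : Fin t' → ℕ) (i' : ℤ), W t' p' i' → sA.X (i' + t' - 2 + c)) →
    (∀ (t'' : ℕ) (p'' : Fin t'' → ℕ) (p₀ : ℕ) (i'' : ℤ), W t'' p'' i'' →
      W 1 (fun _ => p₀) (i'' + t'' - 2 + c')) →
    ∀ (t : ℕ) (p : Fin t → ℕ) (dg : Fin t → ℤ),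
      (∀ k, W 1 (fun _ => p k) (dg k)) → sA.X ((∑ k, dg k) + t - 3 + c + c')
  /-- The linear part
  `Σ_{r=1}^t Σ_{p'_r+p''_r=p_r} (−1)^{ε‴} f(w₁ ∧ ⋯ ∧ a^r_{[1,p'_r]}-bar ∧ a^r_{[p'_r+1,p_r]}-bar ∧ ⋯ ∧ w_t)`,
  where `w_r` is the class of the pure tensor `a^r = a^r_1 ⊗ ⋯ ⊗ a^r_{p_r}` and
  `ε‴ = |w₁| + ⋯ + |w_{r−1}|`. -/
  linApply : ∀ (c : ℤ),
    (∀ (t' : ℕ) (p' : Fin t' → ℕ) (i' : ℤ), W t' p' i' → sA.X (i' + t' - 2 + c)) →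
    ∀ (t : ℕ) (p : Fin t → ℕ) (dgm : ∀ r : Fin t, Fin (p r) → ℤ)
      (a : ∀ r k, sA.X (dgm r k)), sA.X ((∑ r, ∑ k, dgm r k) + (t + 1) - 2 + c)
  /-- `m̃ : G^¡(A) → G^¡(A)`: the extension of a degree `-1` map
  `m : G^¡(A) → A` as a coderivation, given on `w₁ ∧ ⋯ ∧ w_t` by
  `Σ_{I⊔J} (−1)^{ε+ε′+ε″} s^{|J|} m′(w_{i₁}∧⋯∧w_{i_{|I|}}) ∧ w_{j₁}∧⋯∧w_{j_{|J|}}`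
  where `m′ = Σ m_q^p` is the straight shuffle extension of `m`; recorded here
  by its components `W t p i → W t' p' (i + t − t' − 1)`. -/
  mtilde : (∀ (t : ℕ) (p : Fin t → ℕ) (i : ℤ), W t p i → sA.X (i + t - 2)) →
    ∀ (t : ℕ) (p : Fin t → ℕ) (t' : ℕ) (p' : Fin t' → ℕ) (i : ℤ),
      W t p i → W t' p' (i + t - t' - 1)
  /-- `IsLieCoderivationExtending m F` : the family
  `F : G^¡(A) → Lieᶜ(sA)` is a coderivation with respect to the Lie coalgebra
  structures which extends `m`. -/
  IsLieCoderivationExtending :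
    (∀ (t : ℕ) (p : Fin t → ℕ) (i : ℤ), W t p i → sA.X (i + t - 2)) →
    (∀ (t : ℕ) (p : Fin t → ℕ) (p₀ : ℕ) (i : ℤ), W t p i → W 1 (fun _ => p₀) (i + t - 2)) →
    Prop
  /-- `IsComCoderivationExtending m′ F` : the family `F : G^¡(A) → G^¡(A)` is a
  coderivation with respect to the cocommutative coalgebra structures which
  extends `m′ : G^¡(A) → Lieᶜ(sA)`. -/
  IsComCoderivationExtending :
    (∀ (t : ℕ) (p : Fin t → ℕ) (p₀ : ℕ) (i : ℤ), W t p i → W 1 (fun _ => p₀) (i + t - 2)) →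
    (∀ (t : ℕ) (p : Fin t → ℕ) (t' : ℕ) (p' : Fin t' → ℕ) (i : ℤ),
      W t p i → W t' p' (i + t - t' - 1)) → Prop
  /-- `IsGCoderivationExtending m F` : the family `F : G^¡(A) → G^¡(A)` is a
  degree `-1` coderivation of `G^¡`-coalgebras which extends
  `m : G^¡(A) → A`. -/
  IsGCoderivationExtending :
    (∀ (t : ℕ) (p : Fin t → ℕ) (i : ℤ), W t p i → sA.X (i + t - 2)) →
    (∀ (t : ℕ) (p : Fin t → ℕ) (t' : ℕ) (p' : Fin t' → ℕ) (i : ℤ),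
      W t p i → W t' p' (i + t - t' - 1)) → Prop

attribute [instance] BarWedgeSetup.Wacg BarWedgeSetup.Wmod

namespace BarWedgeSetup

variable {K : Type} [Field K]

/-- Transport of a wedge component along an equality of degrees. -/
def Wcast (S : BarWedgeSetup K) {t : ℕ} {p : Fin t → ℕ} {i j : ℤ} (h : i = j)
    (x : S.W t p i) : S.W t p j := by subst h; exact x

/-- A family of maps
`m_{p₁,…,p_t} : (sA)^{⊗p₁}-bar ∧ ⋯ ∧ (sA)^{⊗p_t}-bar → sA` of degree `t − 2`. -/
def GFam (S : BarWedgeSetup K) : Type :=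
  ∀ (t : ℕ) (p : Fin t → ℕ) (i : ℤ), S.W t p i → S.sA.X (i + t - 2)

/-- A family of maps
`m^d_{p₁,…,p_t} : (sA)^{⊗p₁}-bar ∧ ⋯ ∧ (sA)^{⊗p_t}-bar → sA` of degree
`2d + t − 2`. -/
def BVFam (S : BarWedgeSetup K) : Type :=
  ∀ (d : ℕ) (t : ℕ) (p : Fin t → ℕ) (i : ℤ), S.W t p i → S.sA.X (i + t - 2 + 2 * d)

/-- The full straight shuffle extension `m′ = Σ m_q^p : G^¡(A) → Lieᶜ(sA)` of a
family `m`. -/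
def sextFull (S : BarWedgeSetup K) (m : S.GFam) :
    ∀ (t : ℕ) (p : Fin t → ℕ) (p₀ : ℕ) (i : ℤ), S.W t p i → S.W 1 (fun _ => p₀) (i + t - 2) :=
  fun t p p₀ i x =>
    S.Wcast (by ring)
      (S.sextd 0 (fun t' p' i' y => degCast (K := K) (X := S.sA.X) (by ring) (m t' p' i' y))
        t p p₀ i x)

/-- The quadratic relations of homotopy Gerstenhaber algebras:
`Σ_{I⊔J, I≠∅} ± m_{p′,p_J}( Σ_q m^{p_I}_q (w_I) ∧ w_J ) = 0`. -/
def GRel (S : BarWedgeSetup K) (m : S.GFam) : Prop :=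
  ∀ (t : ℕ) (p : Fin t → ℕ) (dg : Fin t → ℤ) (w : ∀ k, S.W 1 (fun _ => p k) (dg k)),
    S.quadApply 0 0
      (fun t' p' i' x => degCast (K := K) (X := S.sA.X) (by ring) (m t' p' i' x))
      (S.sextd 0 (fun t' p' i' x => degCast (K := K) (X := S.sA.X) (by ring) (m t' p' i' x)))
      t p dg w = 0

/-- The relations `R⁰_{p₁,…,p_t}` of homotopy BV-algebras (no linear term). -/
def BVRelZero (S : BarWedgeSetup K) (m : S.BVFam) : Prop :=
  ∀ (t : ℕ) (p : Fin t → ℕ) (dg : Fin t → ℤ) (w : ∀ k, S.W 1 (fun _ => p k) (dg k)),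
    S.quadApply (2 * ((0 : ℕ) : ℤ)) (2 * ((0 : ℕ) : ℤ))
      (m 0) (S.sextd (2 * ((0 : ℕ) : ℤ)) (m 0)) t p dg w = 0

/-- The relations `R^{d+1}_{p₁,…,p_t}` of homotopy BV-algebras, with their
linear term, evaluated on wedges of classes of pure tensors. -/
def BVRelSucc (S : BarWedgeSetup K) (m : S.BVFam) : Prop :=
  ∀ (d : ℕ) (t : ℕ) (p : Fin t → ℕ) (dgm : ∀ r : Fin t, Fin (p r) → ℤ)
    (a : ∀ r k, S.sA.X (dgm r k)) (dg : Fin t → ℤ) (hdg : ∀ r, dg r = ∑ k, dgm r k)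
    (w : ∀ k, S.W 1 (fun _ => p k) (dg k))
    (_ : ∀ r, w r = S.Wcast (hdg r).symm (S.tensorOf (p r) (dgm r) (a r))),
    (∑ e ∈ (Finset.range (d + 2)).attach,
        degCast (K := K) (X := S.sA.X)
          (show (∑ k, dg k) + (t : ℤ) - 3 + 2 * ((e : ℕ) : ℤ)
                + 2 * (((d + 1 - (e : ℕ) : ℕ)) : ℤ)
              = (∑ k, dg k) + (t : ℤ) - 3 + 2 * (((d + 1 : ℕ)) : ℤ) by
            have he := Finset.mem_range.mp e.2; omega)
          (S.quadApply (2 * ((e : ℕ) : ℤ)) (2 * (((d + 1 - (e : ℕ) : ℕ)) : ℤ))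
            (m (e : ℕ)) (S.sextd (2 * (((d + 1 - (e : ℕ) : ℕ)) : ℤ)) (m (d + 1 - (e : ℕ))))
            t p dg w))
      + degCast (K := K) (X := S.sA.X)
          (show (∑ r, ∑ k, dgm r k) + (((t + 1 : ℕ)) : ℤ) - 2 + 2 * ((d : ℕ) : ℤ)
              = (∑ k, dg k) + (t : ℤ) - 3 + 2 * (((d + 1 : ℕ)) : ℤ) by
            have hsum : (∑ k, dg k) = ∑ r, ∑ k, dgm r k :=
              Finset.sum_congr rfl fun r _ => hdg r
            rw [hsum]; push_cast; ring)
          (S.linApply (2 * ((d : ℕ) : ℤ)) (m d) t p dgm a)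
      = 0

end BarWedgeSetup
/-- A dg commutative algebra structure on the dg module `A`, together with the
Koszul hierarchy of higher brackets: for an operator `op` of degree `k` on `A`,
`kbr k op n` is the `n`-th higher bracket `⟨a₁,…,a_n⟩ₙ^{op}`, defined by
`⟨a⟩₁ := op(a)` and recursively by
`⟨a₁,…,a_{n-1},a_n•a'_n⟩ₙ = ⟨a₁,…,a_n,a'_n⟩_{n+1} + ⟨a₁,…,a_n⟩ₙ•a'_n + (−1)^ε a_n•⟨a₁,…,a_{n-1},a'_n⟩ₙ`,
equivalently by the closed formula
`⟨a₁,…,a_n⟩ₙ = Σ_{I⊔J={1,…,n}, I≠∅} (−1)^{n−|I|+ε} op(a_{i₁}•⋯•a_{i_r})•a_{j₁}•⋯•a_{j_{n−r}}`. -/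
structure KoszulHierarchyEnv (K : Type) [Field K] (A : DGMod K) where
  /-- the graded commutative associative product of degree `0` -/
  mul : ∀ p q : ℤ, A.X p → A.X q → A.X (p + q)
  mul_comm : ∀ p q x y,
    mul p q x y = (-1 : K) ^ (p * q) • degCast (K := K) (X := A.X) (add_comm q p) (mul q p y x)
  mul_assoc : ∀ p q r x y z,
    mul p (q + r) x (mul q r y z)
      = degCast (K := K) (X := A.X) (by ring) (mul (p + q) r (mul p q x y) z)
  mul_d : ∀ p q x y,
    A.d (p + q) (mul p q x y)
      = degCast (K := K) (X := A.X) (by ring) (mul (p - 1) q (A.d p x) y)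
        + (-1 : K) ^ p • degCast (K := K) (X := A.X) (by ring) (mul p (q - 1) x (A.d q y))
  /-- the Koszul hierarchy of higher brackets of an operator of degree `k` -/
  kbr : ∀ (k : ℤ), (∀ i, A.X i → A.X (i + k)) → ∀ (n : ℕ) (dgs : Fin n → ℤ),
    (∀ j, A.X (dgs j)) → A.X ((∑ j, dgs j) + k)
  kbr_one : ∀ k op (dgs : Fin 1 → ℤ) a,
    kbr k op 1 dgs a = degCast (K := K) (X := A.X) (by simp) (op (dgs 0) (a 0))

/-- A *commutative BV∞-algebra* (Kravchenko): a dg commutative algebra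
`(A, d_A, •)` equipped with a square-zero operator `Δ = Σ_k Δ_k` whose
homogeneous components satisfy `Δ_{−1} = d_A`, `Δ_k = 0` for `k` even or
`k < −2`, and `Δ_k` has order `≤ (k+3)/2`. -/
structure CommBVinfStr (K : Type) [Field K] (A : DGMod K) (H : KoszulHierarchyEnv K A) where
  /-- the homogeneous component `Δ_k : A_* → A_{*+k}` of the operator `Δ` -/
  Delta : ∀ (k i : ℤ), A.X i → A.X (i + k)
  /-- `Δ_{−1} = d_A` -/
  delta_neg_one : ∀ i x, Delta (-1) i x = degCast (K := K) (X := A.X) (by omega) (A.d i x)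
  /-- `Δ_k = 0` if `k` is even or `k < −2` -/
  delta_zero : ∀ k, (k % 2 = 0 ∨ k < -2) → ∀ i x, Delta k i x = 0
  /-- `Δ_k` has order `≤ (k+3)/2`: the `n`-th higher brackets of `Δ_k` vanish
  for `n > (k+3)/2` -/
  delta_order : ∀ (k : ℤ) (n : ℕ), k + 3 < 2 * n →
    ∀ (dgs : Fin n → ℤ) (a : ∀ j, A.X (dgs j)), H.kbr k (Delta k) n dgs a = 0
  /-- `Δ² = 0`, componentwise: `Σ_{k+l=m} Δ_l ∘ Δ_k = 0` for each `m` -/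
  delta_sq : ∀ (m i : ℤ) (x : A.X i),
    (∑ k ∈ Finset.Icc (-1 : ℤ) (m + 1),
      degCast (K := K) (X := A.X) (show i + k + (m - k) = i + m by ring)
        (Delta (m - k) (i + k) (Delta k i x))) = 0

/-- Data for the Koszul dual dg cooperad of `BV` (Lemma on `d_φ`):
`C = qBV^¡` is the Koszul dual cooperad of the quadratic operad `qBV` (with
zero internal differential), `sV` is the `𝕊`-module of suspended generators
`s(• K₂ ⊕ ⟨,⟩ K₂ ⊕ Δ K)`, `proj` is the projection of the cofree-type cooperad
`C` onto its cogenerators, `phiInduced` is the degree `−1` composite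
`C ↠ s²qR → sV` induced by the map `φ : qR → V` sending the quadratic relator
`Δ∘(-•-) − (Δ-)•- − -•(Δ-)` to `⟨-,-⟩` and all other quadratic BV relators to
`0` (so that the space of relations `R` is the graph of `φ`), and `dExplicit`
is the map given, under the identification
`qBV^¡ ≅ K[δ] ∘ SᶜCom₁ᶜ ∘ SᶜLieᶜ`, by the explicit formula
`δ^d ⊗ L₁ ⊙ ⋯ ⊙ L_t ↦ Σ_{i=1}^t (−1)^{ε_i} δ^{d−1} ⊗ L₁ ⊙ ⋯ ⊙ L_i′ ⊙ L_i″ ⊙ ⋯ ⊙ L_t`,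
where `L_i′ ⊙ L_i″` is the Sweedler notation for the image of `L_i` under the
binary part `SᶜLieᶜ → SᶜLieᶜ(2) ⊗ (SᶜLieᶜ ⊗ SᶜLieᶜ)` of the decomposition map
of the cooperad `SᶜLieᶜ`, with `ε_i = |L₁| + ⋯ + |L_{i−1}|`, the image being
`0` when `d = 0` or when all `L_i ∈ SᶜLieᶜ(1) = I K`. -/
structure KoszulDualBVSetup (K : Type) [Field K] where
  C : DGCooperad K
  C_d_zero : ∀ n i x, C.d n i x = 0
  sV : DGSMod K
  proj : ∀ n i, C.ob n i →ₗ[K] sV.ob n i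
  phiInduced : ∀ n i, C.ob n i →ₗ[K] sV.ob n (i - 1)
  dExplicit : ∀ n i, C.ob n i →ₗ[K] C.ob n (i - 1)
/-- A topological vertex operator algebra (TVOA) `(A, -₍ᵢ₎-, Q, G, L, F)` with
conformal weights in `ℕ`, recorded through the data used in the Lian–Zuckerman
statement: the bigraded components `V r s` (fermionic/homological degree
`r ∈ ℤ`, conformal weight `s ∈ ℕ`), the BRST differential `d_A = Q₍₀₎`, the
operator `G₍₁₎`, the Lian–Zuckerman operations `x·y := x₍₋₁₎y` and
`{x,y} := (−1)^{|x|}(G₍₀₎x)₍₀₎y` (both of conformal weight `0`), the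
supercommutator relation `G₍₁₎Q₍₀₎ + Q₍₀₎G₍₁₎ = s·id` on conformal weight `s`
(so that `(A^s, d_A)` is contractible with contracting homotopy `(1/s)G₍₁₎`
for `s > 0`), the underlying total dg module `Atot`, the cobar construction
`BV∞ = Ω BV^¡`, the endomorphism operad construction, and the predicates
qualifying a homotopy BV-algebra structure on `Atot`. -/
structure TVOASetup (K : Type) [Field K] where
  V : ℤ → ℕ → Type
  [acg : ∀ r s, AddCommGroup (V r s)]
  [mod : ∀ r s, Module K (V r s)]
  /-- the BRST differential `d_A = Q₍₀₎` (fermionic degree `−1`, weight `0`) -/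
  Qop : ∀ r s, V r s →ₗ[K] V (r - 1) s
  /-- the operator `G₍₁₎` (fermionic degree `+1`, weight `0`) -/
  Gop : ∀ r s, V r s →ₗ[K] V (r + 1) s
  /-- the Lian–Zuckerman product `x·y := x₍₋₁₎y` -/
  lzMul : ∀ r s r' s', V r s → V r' s' → V (r + r') (s + s')
  /-- the Lian–Zuckerman bracket `{x,y} := (−1)^{|x|}(G₍₀₎x)₍₀₎y` -/
  lzBr : ∀ r s r' s', V r s → V r' s' → V (r + r' + 1) (s + s')
  Q_sq : ∀ r s x, Qop (r - 1) s (Qop r s x) = 0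
  /-- the supercommutator relation `G₍₁₎Q₍₀₎x + Q₍₀₎G₍₁₎x = s·x` for `x ∈ A^s` -/
  scomm : ∀ r s x,
    degCast (K := K) (X := fun j => V j s) (show r - 1 + 1 = r by omega)
        (Gop (r - 1) s (Qop r s x))
      + degCast (K := K) (X := fun j => V j s) (show r + 1 - 1 = r by omega)
          (Qop (r + 1) s (Gop r s x))
      = (s : K) • x
  /-- the underlying total dg module of the TVOA -/
  Atot : DGMod K
  totIso : ∀ r, Atot.X r ≃ₗ[K] (⨁ s : ℕ, V r s)
  /-- the differential of `Atot` is the BRST differential `Q₍₀₎` -/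
  tot_d : ∀ r x s, (totIso (r - 1) (Atot.d r x)) s = Qop r s ((totIso r x) s)
  /-- the operad `BV∞ = Ω BV^¡` -/
  BVinf : DGOperad K
  /-- the endomorphism dg operad of a dg module -/
  EndOp : DGMod K → DGOperad K
  /-- the homotopy BV-algebra structure `γ` is homogeneous with respect to the
  conformal weight -/
  Homogeneous : DGOperadHom BVinf (EndOp Atot) → Prop
  /-- `γ` extends, in conformal weight zero, the Lian–Zuckerman operations
  `x·y`, `{x,y}` and `Δ = G₍₁₎` -/
  ExtendsLZ : DGOperadHom BVinf (EndOp Atot) → Prop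
  /-- `γ` induces the Lian–Zuckerman BV-algebra structure on the BRST
  cohomology `H^•(A, Q₍₀₎)` -/
  InducesLZBV : DGOperadHom BVinf (EndOp Atot) → Prop

/-- A quadratic–linear presentation `P = F(V)/(R)`,
`R ⊆ V ⊕ F(V)^{(2)}`, of a dg properad, together with: its quadratic analogue
`qP = F(V)/(qR)`, the graded properad `gr P` of the filtration by the number of
generators, the cobar construction `Ω P^¡` on the Koszul dual dg coproperad
`P^¡ = (qP^¡, d_φ)`, the canonical morphism `Ω P^¡ → P`, the natural
epimorphism `qP ↠ gr P`, the standard identification `gr P ≅ P` of graded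
`𝕊`-bimodules, and the three Koszulness conditions, recorded as the
propositions `relMinimal`, `relMaximal` and `qPKoszul`. -/
structure KoszulQLProperadSetup (K : Type) [Field K] where
  P : DGProperad K
  qP : DGProperad K
  grP : DGProperad K
  /-- the cobar construction `Ω P^¡ = (F(s⁻¹ q̄P^¡), d₁ + d₂)` -/
  cobarDual : DGProperad K
  /-- the canonical morphism of dg properads `Ω P^¡ → P` -/
  res : DGProperadHom cobarDual P
  /-- the natural epimorphism of bigraded properads `qP ↠ gr P` -/
  toGr : DGProperadHom qP grP
  toGr_surjective : ∀ m n i, Function.Surjective (toGr.f m n i)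
  /-- `gr P ≅ P` as graded `𝕊`-bimodules -/
  grIso : GradedSBimodIso grP P
  /-- condition (1): `R ∩ V = {0}` -/
  relMinimal : Prop
  /-- condition (2): `{R⊗V + V⊗R} ∩ F(V)^{(2)} ⊆ R ∩ F(V)^{(2)}` -/
  relMaximal : Prop
  /-- condition (3): the quadratic properad `qP` is Koszul in the classical
  sense -/
  qPKoszul : Prop

/-- Framework for the Transfer Theorem over a Koszul operad `P` (possibly
inhomogeneous quadratic): the cobar construction `P∞ = Ω P^¡`, the Koszul dual
dg cooperad `P^¡`, endomorphism operads, the operadic bar construction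
`B End_A = F^c(s End_A)`, the Rosetta-stone correspondence between
`P∞`-algebra structures and morphisms of dg cooperads `P^¡ → B End_A`, the
van der Laan morphism `Ψ`, and ∞-morphisms of `P∞`-algebras. -/
structure TransferSetup (K : Type) [Field K] where
  /-- `P` is a Koszul operad; `Pinf = Ω P^¡` -/
  Pinf : DGOperad K
  /-- the Koszul dual dg cooperad `P^¡` -/
  Pdual : DGCooperad K
  /-- the statement that the operad `P` is Koszul (in the quadratic–linear
  sense) -/
  koszul : Prop
  /-- the endomorphism dg operad of a dg module -/
  EndOp : DGMod K → DGOperad K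
  /-- the operadic bar construction `B End_A` -/
  barEnd : DGMod K → DGCooperad K
  /-- the Rosetta stone: `P∞`-algebra structures on `A` correspond to morphisms
  of dg cooperads `P^¡ → B End_A` -/
  rosetta : ∀ A : DGMod K, DGOperadHom Pinf (EndOp A) ≃ DGCooperadHom Pdual (barEnd A)
  /-- the van der Laan morphism of dg cooperads `Ψ : B End_W → B End_V`
  extending `μ ↦ p∘μ∘i^{⊗n}`, defined on a tree labelled by operations of
  `End_W` by labelling every leaf by `i`, every internal edge by the homotopy
  `h` and the root by `p` -/
  vdL : ∀ {V W : DGMod K}, HtpyEquivData V W → DGCooperadHom (barEnd W) (barEnd V)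
  /-- ∞-morphisms between `P∞`-algebras, i.e. morphisms of dg `P^¡`-coalgebras
  between the bar constructions `P^¡(V) → P^¡(W)` -/
  InfMor : ∀ (V W : DGMod K),
    DGOperadHom Pinf (EndOp V) → DGOperadHom Pinf (EndOp W) → Type
  /-- an ∞-morphism is an ∞-quasi-isomorphism when its first component is a
  quasi-isomorphism -/
  IsInfQuasiIso : ∀ {V W : DGMod K} {γV : DGOperadHom Pinf (EndOp V)}
    {γW : DGOperadHom Pinf (EndOp W)}, InfMor V W γV γW → Prop
  /-- the first component `V → W` of an ∞-morphism -/
  firstComp : ∀ {V W : DGMod K} {γV : DGOperadHom Pinf (EndOp V)}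
    {γW : DGOperadHom Pinf (EndOp W)}, InfMor V W γV γW → ∀ j, V.X j →ₗ[K] W.X j

/-! ### The Bianchi identity for a sequence in an ungraded module -/

/-- The weight `m + 1` component of the curvature `∂(g) + ½[g, g]` of `g = g₀ + g₁ + ⋯`, where
`∂ = D0 + D1` with `D0` preserving and `D1` raising the weight, and `B` is the bracket. -/
def curvSucc {K M : Type} [Field K] [AddCommGroup M] [Module K M]
    (D0 D1 : M →ₗ[K] M) (B : M →ₗ[K] M →ₗ[K] M) (g : ℕ → M) (m : ℕ) : M :=
  D0 (g (m + 1)) + D1 (g m)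
    + (2⁻¹ : K) • ∑ p ∈ Finset.HasAntidiagonal.antidiagonal (m + 1), B (g p.1) (g p.2)

/-- The weight `m` component of the curvature, with `curvSucc` in positive weights. -/
def curv {K M : Type} [Field K] [AddCommGroup M] [Module K M]
    (D0 D1 : M →ₗ[K] M) (B : M →ₗ[K] M →ₗ[K] M) (g : ℕ → M) : ℕ → M
  | 0 => D0 (g 0) + (2⁻¹ : K) • B (g 0) (g 0)
  | m + 1 => curvSucc D0 D1 B g m

/-- A derivation applied to `½[g, g]` gives `-[g, D g]`, weight by weight: the two Leibniz terms
agree after exchanging the indices. -/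
lemma map_half_sum_bracket {K M : Type} [Field K] [CharZero K] [AddCommGroup M] [Module K M]
    (D : M →ₗ[K] M) (B : M →ₗ[K] M →ₗ[K] M) (g : ℕ → M)
    (hD : ∀ k l, D (B (g k) (g l)) = -B (g k) (D (g l)) - B (g l) (D (g k))) (m : ℕ) :
    D ((2⁻¹ : K) • ∑ p ∈ Finset.HasAntidiagonal.antidiagonal m, B (g p.1) (g p.2))
      = -∑ p ∈ Finset.HasAntidiagonal.antidiagonal m, B (g p.1) (D (g p.2)) := by
  have hswap : ∑ p ∈ Finset.HasAntidiagonal.antidiagonal m, B (g p.2) (D (g p.1))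
      = ∑ p ∈ Finset.HasAntidiagonal.antidiagonal m, B (g p.1) (D (g p.2)) :=
    Finset.Nat.sum_antidiagonal_swap (n := m) (f := fun p => B (g p.1) (D (g p.2)))
  simp only [map_smul, map_sum, hD, Finset.sum_sub_distrib, Finset.sum_neg_distrib, hswap]
  module

/-- The Jacobi identity `[g, [g, g]] = 0`, weight by weight: three times the sum is the sum of the
cyclic Jacobi expressions, and `3` is invertible. -/
lemma sum_triple_bracket {K M : Type} [Field K] [CharZero K] [AddCommGroup M] [Module K M]
    (B : M →ₗ[K] M →ₗ[K] M) (g : ℕ → M)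
    (hJ : ∀ a b c, B (g a) (B (g b) (g c)) + B (g b) (B (g c) (g a))
      + B (g c) (B (g a) (g b)) = 0) (m : ℕ) :
    ∑ p ∈ Finset.HasAntidiagonal.antidiagonal m, ∑ q ∈ Finset.HasAntidiagonal.antidiagonal p.2,
      B (g p.1) (B (g q.1) (g q.2)) = 0 := by
  -- Cyclic rotation of a triple sum over `a + b + c = m`.
  have rot : ∀ F : ℕ → ℕ → ℕ → M,
      ∑ p ∈ Finset.HasAntidiagonal.antidiagonal m, ∑ q ∈ Finset.HasAntidiagonal.antidiagonal p.2, F p.1 q.1 q.2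
        = ∑ p ∈ Finset.HasAntidiagonal.antidiagonal m, ∑ q ∈ Finset.HasAntidiagonal.antidiagonal p.2, F q.1 q.2 p.1 := by
    intro F
    rw [Finset.sum_sigma', Finset.sum_sigma']
    refine Finset.sum_bij'
      (fun x _ => ⟨(x.2.2, x.1.1 + x.2.1), (x.1.1, x.2.1)⟩)
      (fun x _ => ⟨(x.2.1, x.2.2 + x.1.1), (x.2.2, x.1.1)⟩) ?_ ?_ ?_ ?_ ?_
    all_goals
      rintro ⟨⟨a, e⟩, ⟨b, c⟩⟩ h
      simp only [Finset.mem_sigma, Finset.HasAntidiagonal.mem_antidiagonal] at h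
      obtain ⟨rfl, rfl⟩ := h
    all_goals simp
    all_goals omega
  set S := ∑ p ∈ Finset.HasAntidiagonal.antidiagonal m, ∑ q ∈ Finset.HasAntidiagonal.antidiagonal p.2,
      B (g p.1) (B (g q.1) (g q.2)) with hS
  have h1 := rot fun a b c => B (g a) (B (g b) (g c))
  have h2 := h1.trans (rot fun a b c => B (g b) (B (g c) (g a)))
  have h3 : S + S + S = 0 := by
    calc S + S + S
        = S + ∑ p ∈ Finset.HasAntidiagonal.antidiagonal m,
              ∑ q ∈ Finset.HasAntidiagonal.antidiagonal p.2, B (g q.1) (B (g q.2) (g p.1))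
            + ∑ p ∈ Finset.HasAntidiagonal.antidiagonal m,
              ∑ q ∈ Finset.HasAntidiagonal.antidiagonal p.2, B (g q.2) (B (g p.1) (g q.1)) := by
          rw [← h2, ← h1]
      _ = 0 := by
          simp only [hS, ← Finset.sum_add_distrib, hJ, Finset.sum_const_zero]
  have h4 : (3 : K) • S = 0 := by rw [← h3]; module
  exact (smul_eq_zero.mp h4).resolve_left (by norm_num)

/-- The Bianchi identity `∂(F) + [g, F] = 0` for the curvature `F = ∂(g) + ½[g, g]`, in positive
weight. -/
lemma bianchi {K M : Type} [Field K] [CharZero K] [AddCommGroup M] [Module K M]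
    (D0 D1 : M →ₗ[K] M) (B : M →ₗ[K] M →ₗ[K] M) (g : ℕ → M)
    (hsq0 : ∀ k, D0 (D0 (g k)) = 0) (hsq1 : ∀ k, D1 (D1 (g k)) = 0)
    (hanti : ∀ k, D0 (D1 (g k)) + D1 (D0 (g k)) = 0)
    (hD0 : ∀ k l, D0 (B (g k) (g l)) = -B (g k) (D0 (g l)) - B (g l) (D0 (g k)))
    (hD1 : ∀ k l, D1 (B (g k) (g l)) = -B (g k) (D1 (g l)) - B (g l) (D1 (g k)))
    (hJ : ∀ a b c, B (g a) (B (g b) (g c)) + B (g b) (B (g c) (g a))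
      + B (g c) (B (g a) (g b)) = 0) (m : ℕ) :
    D0 (curv D0 D1 B g (m + 1)) + D1 (curv D0 D1 B g m)
      + ∑ p ∈ Finset.HasAntidiagonal.antidiagonal (m + 1), B (g p.1) (curv D0 D1 B g p.2) = 0 := by
  -- `D1 g` shifted so that its weight `k` component is `s k`.
  let s : ℕ → M := fun k => Nat.casesOn k 0 fun j => D1 (g j)
  have hcurv : ∀ k, curv D0 D1 B g k = D0 (g k) + s k
      + (2⁻¹ : K) • ∑ q ∈ Finset.HasAntidiagonal.antidiagonal k, B (g q.1) (g q.2) := by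
    intro k
    cases k <;> simp [curv, curvSucc, s]
  have hs0 : D1 (s m) = 0 := by
    cases m <;> simp [s, hsq1]
  have hs : ∑ p ∈ Finset.HasAntidiagonal.antidiagonal (m + 1), B (g p.1) (s p.2)
      = ∑ p ∈ Finset.HasAntidiagonal.antidiagonal m, B (g p.1) (D1 (g p.2)) := by
    rw [Finset.Nat.sum_antidiagonal_succ']
    simp [s]
  have hT := sum_triple_bracket B g hJ (m + 1)
  have e0 := map_half_sum_bracket D0 B g hD0 (m + 1)
  have e1 := map_half_sum_bracket D1 B g hD1 m
  have hB : ∑ p ∈ Finset.HasAntidiagonal.antidiagonal (m + 1), B (g p.1) (curv D0 D1 B g p.2)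
      = ∑ p ∈ Finset.HasAntidiagonal.antidiagonal (m + 1), B (g p.1) (D0 (g p.2))
        + ∑ p ∈ Finset.HasAntidiagonal.antidiagonal m, B (g p.1) (D1 (g p.2)) := by
    simp only [hcurv, map_add, map_smul, map_sum, Finset.sum_add_distrib, ← Finset.smul_sum,
      hs, hT, smul_zero, add_zero]
  have hsm : s (m + 1) = D1 (g m) := rfl
  rw [hB, hcurv (m + 1), hcurv m, map_add, map_add, map_add, map_add, e0, e1, hsq0, hs0, hsm]
  have h := hanti m
  rw [add_eq_zero_iff_eq_neg] at h
  rw [h]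
  abel

/-! ### The total module of a weight-graded dg Lie algebra -/

namespace WtDGLie

variable {K : Type} [Field K]

/-- The direct sum of all the bigraded components, in which equations between components of
propositionally equal bidegrees can be stated without transport. -/
abbrev Tot (L : WtDGLie K) : Type := ⨁ p : ℕ × ℤ, L.X p.1 p.2

/-- The inclusion of the component of weight `n` and degree `i`. -/
def incl (L : WtDGLie K) (n : ℕ) (i : ℤ) : L.X n i →ₗ[K] L.Tot :=
  DirectSum.lof K (ℕ × ℤ) (fun p => L.X p.1 p.2) (n, i)

/-- `∂₀` on the total module. -/
def D0 (L : WtDGLie K) : L.Tot →ₗ[K] L.Tot :=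
  DirectSum.toModule K _ _ fun p => L.incl p.1 (p.2 - 1) ∘ₗ L.d0 p.1 p.2

/-- `∂₁` on the total module. -/
def D1 (L : WtDGLie K) : L.Tot →ₗ[K] L.Tot :=
  DirectSum.toModule K _ _ fun p => L.incl (p.1 + 1) (p.2 - 1) ∘ₗ L.d1 p.1 p.2

/-- The bracket on the total module. -/
def Br (L : WtDGLie K) : L.Tot →ₗ[K] L.Tot →ₗ[K] L.Tot :=
  DirectSum.toModule K _ _ fun p =>
    (DirectSum.toModule K _ _ fun q =>
      ((L.br p.1 q.1 p.2 q.2).compr₂ (L.incl (p.1 + q.1) (p.2 + q.2))).flip).flip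

variable (L : WtDGLie K)

lemma incl_injective (n : ℕ) (i : ℤ) : Function.Injective (L.incl n i) :=
  DirectSum.of_injective (β := fun p : ℕ × ℤ => L.X p.1 p.2) (n, i)

@[simp] lemma incl_cast {m m' : ℕ} {i j : ℤ} (hm : m = m') (h : i = j) (x : L.X m i) :
    L.incl m' j (wdegCast (K := K) (X := L.X) hm h x) = L.incl m i x := by
  subst hm; subst h; rfl

@[simp] lemma D0_incl (n : ℕ) (i : ℤ) (x : L.X n i) :
    L.D0 (L.incl n i x) = L.incl n (i - 1) (L.d0 n i x) := by
  simp [D0, incl]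

@[simp] lemma D1_incl (n : ℕ) (i : ℤ) (x : L.X n i) :
    L.D1 (L.incl n i x) = L.incl (n + 1) (i - 1) (L.d1 n i x) := by
  simp [D1, incl]

@[simp] lemma Br_incl (m n : ℕ) (p q : ℤ) (x : L.X m p) (y : L.X n q) :
    L.Br (L.incl m p x) (L.incl n q y) = L.incl (m + n) (p + q) (L.br m n p q x y) := by
  simp [Br, incl]

lemma Br_antisymm (m n : ℕ) (p q : ℤ) (x : L.X m p) (y : L.X n q) :
    L.Br (L.incl m p x) (L.incl n q y)
      = -((-1 : K) ^ (p * q)) • L.Br (L.incl n q y) (L.incl m p x) := by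
  rw [Br_incl, L.antisymm, map_smul, incl_cast, Br_incl]

/-- In degree `-1` the bracket is symmetric. -/
lemma Br_comm (m n : ℕ) (x : L.X m (-1)) (y : L.X n (-1)) :
    L.Br (L.incl m (-1) x) (L.incl n (-1) y) = L.Br (L.incl n (-1) y) (L.incl m (-1) x) := by
  have h := L.Br_antisymm m n (-1) (-1) x y
  norm_num at h ⊢
  exact h

/-- An element of degree `-2` anticommutes with an element of degree `-1`. -/
lemma Br_anticomm (m n : ℕ) (x : L.X m (-1 - 1)) (y : L.X n (-1)) :
    L.Br (L.incl m (-1 - 1) x) (L.incl n (-1) y)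
      = -L.Br (L.incl n (-1) y) (L.incl m (-1 - 1) x) := by
  have h := L.Br_antisymm m n (-1 - 1) (-1) x y
  have e : ((-1 : K) ^ ((-1 - 1 : ℤ) * -1)) = 1 := by norm_num
  rw [h, e, neg_smul, one_smul]

/-- The Leibniz rule for `∂₀` on elements of degree `-1`, with both differentials moved to the
second argument of the bracket. -/
lemma D0_Br (m n : ℕ) (x : L.X m (-1)) (y : L.X n (-1)) :
    L.D0 (L.Br (L.incl m (-1) x) (L.incl n (-1) y))
      = -L.Br (L.incl m (-1) x) (L.D0 (L.incl n (-1) y))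
        - L.Br (L.incl n (-1) y) (L.D0 (L.incl m (-1) x)) := by
  rw [Br_incl, D0_incl, L.leibniz0, map_add, map_smul, incl_cast, incl_cast, ← Br_incl,
    ← Br_incl, Br_anticomm, D0_incl, D0_incl, zpow_neg_one, inv_neg_one, neg_one_smul]
  abel

/-- The Leibniz rule for `∂₁` on elements of degree `-1`, with both differentials moved to the
second argument of the bracket. -/
lemma D1_Br (m n : ℕ) (x : L.X m (-1)) (y : L.X n (-1)) :
    L.D1 (L.Br (L.incl m (-1) x) (L.incl n (-1) y))
      = -L.Br (L.incl m (-1) x) (L.D1 (L.incl n (-1) y))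
        - L.Br (L.incl n (-1) y) (L.D1 (L.incl m (-1) x)) := by
  rw [Br_incl, D1_incl, L.leibniz1, map_add, map_smul, incl_cast, incl_cast, ← Br_incl,
    ← Br_incl, Br_anticomm, D1_incl, D1_incl, zpow_neg_one, inv_neg_one, neg_one_smul]
  abel

/-- The Jacobi identity in cyclic form on elements of degree `-1`. -/
lemma Br_jacobi (a b c : ℕ) (x : L.X a (-1)) (y : L.X b (-1)) (z : L.X c (-1)) :
    L.Br (L.incl a (-1) x) (L.Br (L.incl b (-1) y) (L.incl c (-1) z))
      + L.Br (L.incl b (-1) y) (L.Br (L.incl c (-1) z) (L.incl a (-1) x))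
      + L.Br (L.incl c (-1) z) (L.Br (L.incl a (-1) x) (L.incl b (-1) y)) = 0 := by
  have h : L.Br (L.incl a (-1) x) (L.Br (L.incl b (-1) y) (L.incl c (-1) z))
      = -L.Br (L.incl c (-1) z) (L.Br (L.incl a (-1) x) (L.incl b (-1) y))
        - L.Br (L.incl b (-1) y) (L.Br (L.incl a (-1) x) (L.incl c (-1) z)) := by
    have e : (-1 : K) ^ ((-1 : ℤ) * -1) = -1 := by norm_num
    rw [L.Br_incl b c, L.Br_incl a (b + c), L.jacobi, map_add, map_smul, incl_cast, incl_cast,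
      ← L.Br_incl (a + b) c, ← L.Br_incl b (a + c), ← L.Br_incl a c, e, neg_one_smul,
      L.Br_incl a b]
    have h2 := L.Br_anticomm (a + b) c (L.br a b (-1) (-1) x y) z
    rw [show L.Br (L.incl (a + b) (-1 + -1) (L.br a b (-1) (-1) x y)) (L.incl c (-1) z)
      = -L.Br (L.incl c (-1) z) (L.incl (a + b) (-1 + -1) (L.br a b (-1) (-1) x y)) from h2]
    abel
  rw [h, L.Br_comm c a]
  abel

/-! ### The Maurer–Cartan equations in the total module -/

/-- The components of a degree `-1` element, in the total module. -/
def seq (γ : ∀ k, L.X k (-1)) (k : ℕ) : L.Tot := L.incl k (-1) (γ k)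

lemma MCzero_iff (γ : ∀ k, L.X k (-1)) :
    L.MCzero γ ↔ curv L.D0 L.D1 L.Br (L.seq γ) 0 = 0 := by
  unfold MCzero
  rw [← (L.incl_injective 0 (-2)).eq_iff, map_zero, map_add, map_smul, incl_cast, incl_cast]
  simp [curv, seq]

lemma MCsucc_iff (γ : ∀ k, L.X k (-1)) (m : ℕ) :
    L.MCsucc γ m ↔ curv L.D0 L.D1 L.Br (L.seq γ) (m + 1) = 0 := by
  unfold MCsucc
  rw [← (L.incl_injective (m + 1) (-2)).eq_iff, map_zero, map_add, map_add, map_smul, map_sum]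
  simp only [incl_cast, ← Br_incl, ← D0_incl, ← D1_incl]
  rw [Finset.sum_attach (Finset.range (m + 2))
    (fun k => L.Br (L.incl k (-1) (γ k)) (L.incl (m + 1 - k) (-1) (γ (m + 1 - k)))),
    ← Finset.Nat.sum_antidiagonal_eq_sum_range_succ
    (fun k l => L.Br (L.incl k (-1) (γ k)) (L.incl l (-1) (γ l)))]
  rfl

lemma incl_twd (γ₀ : L.X 0 (-1)) (n : ℕ) (i : ℤ) (x : L.X n i) :
    L.incl n (i - 1) (L.twd γ₀ n i x)
      = L.D0 (L.incl n i x) + L.Br (L.incl 0 (-1) γ₀) (L.incl n i x) := by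
  rw [twd, map_add, incl_cast, D0_incl, Br_incl]

/-- The weight `n + 1` curvature is the twisted differential of `γ_{n+1}` plus the obstruction:
the two extreme terms of the bracket sum both equal `[γ₀, γ_{n+1}]`. -/
lemma curv_eq_twd_add_obstruction [CharZero K] (γ : ∀ k, L.X k (-1)) (n : ℕ) :
    curv L.D0 L.D1 L.Br (L.seq γ) (n + 1)
      = L.incl (n + 1) (-1 - 1) (L.twd (γ 0) (n + 1) (-1) (γ (n + 1)))
        + L.incl (n + 1) (-2) (L.obstruction γ n) := by
  rw [incl_twd, obstruction, map_add, map_smul, map_sum]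
  simp only [incl_cast, ← Br_incl, ← D1_incl]
  rw [Finset.sum_attach (Finset.Icc 1 n)
    (fun k => L.Br (L.incl k (-1) (γ k)) (L.incl (n + 1 - k) (-1) (γ (n + 1 - k))))]
  have hsum : ∑ p ∈ Finset.HasAntidiagonal.antidiagonal (n + 1),
        L.Br (L.seq γ p.1) (L.seq γ p.2)
      = L.Br (L.seq γ 0) (L.seq γ (n + 1))
        + ∑ k ∈ Finset.Icc 1 n, L.Br (L.seq γ k) (L.seq γ (n + 1 - k))
        + L.Br (L.seq γ (n + 1)) (L.seq γ 0) := by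
    rw [Finset.Nat.sum_antidiagonal_eq_sum_range_succ (fun k l => L.Br (L.seq γ k) (L.seq γ l)),
      Finset.sum_range_succ, Finset.range_eq_Ico, Finset.sum_eq_sum_Ico_succ_bot (by omega)]
    simp only [Nat.sub_zero, Nat.sub_self, zero_add]
    rfl
  have hcomm : L.Br (L.seq γ (n + 1)) (L.seq γ 0) = L.Br (L.seq γ 0) (L.seq γ (n + 1)) :=
    L.Br_comm _ _ _ _
  rw [curv, curvSucc, hsum, hcomm]
  simp only [seq]
  module

lemma obstruction_congr {γ γ' : ∀ k, L.X k (-1)} {n : ℕ} (h : ∀ k ≤ n, γ k = γ' k) :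
    L.obstruction γ n = L.obstruction γ' n := by
  unfold obstruction
  rw [h n le_rfl]
  congr 2
  refine Finset.sum_congr rfl fun k _ => ?_
  have hk := Finset.mem_Icc.mp k.2
  rw [h k hk.2, h (n + 1 - k) (by omega)]

/-- The curvature of weight `m` only depends on the components of weight at most `m`. -/
lemma curv_congr {γ γ' : ∀ k, L.X k (-1)} {m : ℕ} (h : ∀ k ≤ m, γ k = γ' k) :
    curv L.D0 L.D1 L.Br (L.seq γ) m = curv L.D0 L.D1 L.Br (L.seq γ') m := by
  have hs : ∀ k ≤ m, L.seq γ k = L.seq γ' k := fun k hk => by rw [seq, seq, h k hk]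
  cases m with
  | zero => rw [curv, curv, hs 0 le_rfl]
  | succ m =>
    rw [curv, curv, curvSucc, curvSucc, hs (m + 1) le_rfl, hs m (by omega)]
    congr 2
    refine Finset.sum_congr rfl fun p hp => ?_
    have := Finset.HasAntidiagonal.mem_antidiagonal.mp hp
    rw [hs p.1 (by omega), hs p.2 (by omega)]

/-- The Bianchi identity for a degree `-1` element of a weight-graded dg Lie algebra. -/
lemma bianchi_seq [CharZero K] (γ : ∀ k, L.X k (-1)) (m : ℕ) :
    L.D0 (curv L.D0 L.D1 L.Br (L.seq γ) (m + 1)) + L.D1 (curv L.D0 L.D1 L.Br (L.seq γ) m)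
      + ∑ p ∈ Finset.HasAntidiagonal.antidiagonal (m + 1),
          L.Br (L.seq γ p.1) (curv L.D0 L.D1 L.Br (L.seq γ) p.2) = 0 := by
  apply bianchi
  · intro k; rw [seq, D0_incl, D0_incl, L.d0_sq, map_zero]
  · intro k; rw [seq, D1_incl, D1_incl, L.d1_sq, map_zero]
  · intro k
    simp only [seq, D0_incl, D1_incl, ← map_add, L.d0_d1, map_zero]
  · intro k l; exact L.D0_Br _ _ _ _
  · intro k l; exact L.D1_Br _ _ _ _
  · intro a b c; exact L.Br_jacobi _ _ _ _ _ _

/-- If `γ` solves the Maurer–Cartan equations up to weight `n`, the obstruction is a cycle. -/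
lemma twd_obstruction [CharZero K] (γ : ∀ k, L.X k (-1)) (n : ℕ)
    (h0 : L.MCzero γ) (h : ∀ m, m < n → L.MCsucc γ m) :
    L.twd (γ 0) (n + 1) (-2) (L.obstruction γ n) = 0 := by
  -- With the component of weight `n + 1` set to zero, the curvature vanishes up to weight `n`
  -- and equals the obstruction in weight `n + 1`.
  set γ' : ∀ k, L.X k (-1) := Function.update γ (n + 1) 0 with hγ'
  have hag : ∀ k ≤ n, γ' k = γ k := fun k hk => Function.update_of_ne (by omega) _ _
  have htop : γ' (n + 1) = 0 := Function.update_self _ _ _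
  have hlow : ∀ k ≤ n, curv L.D0 L.D1 L.Br (L.seq γ') k = 0 := by
    intro k hk
    rw [L.curv_congr fun j hj => hag j (hj.trans hk)]
    cases k with
    | zero => exact (L.MCzero_iff γ).mp h0
    | succ k => exact (L.MCsucc_iff γ k).mp (h k hk)
  have hob : curv L.D0 L.D1 L.Br (L.seq γ') (n + 1)
      = L.incl (n + 1) (-2) (L.obstruction γ n) := by
    rw [curv_eq_twd_add_obstruction, L.obstruction_congr hag, incl_twd, htop]
    simp
  have hb := L.bianchi_seq γ' n
  rw [hlow n le_rfl, Finset.Nat.sum_antidiagonal_succ, hob, map_zero, add_zero,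
    Finset.sum_eq_zero, add_zero] at hb
  · apply L.incl_injective (n + 1) (-2 - 1)
    rw [incl_twd, map_zero, ← hag 0 (Nat.zero_le n)]
    exact hb
  · intro p hp
    have := Finset.HasAntidiagonal.mem_antidiagonal.mp hp
    rw [hlow p.2 (by omega), map_zero]

end WtDGLie

/-- Theorem: obstruction theory in a weight-graded dg Lie
algebra.  Let `(g = ∏_{n≥0} g^{(n)}, ∂ = ∂₀ + ∂₁)` be a dg Lie algebra such
that `∂₀` and `∂₁` are anticommuting square-zero derivations with
`∂₀ : g^{(n)} → g^{(n)}` and `∂₁ : g^{(n−1)} → g^{(n)}`, the bracket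
respecting the weight grading.  Let `γ = γ₀ + γ₁ + ⋯ + γₙ` be a degree `−1`
element satisfying the equations `(MC_k)` for all `k ≤ n`, and set
`γ̃_{n+1} := ∂₁(γₙ) + ½ Σ_{k+l=n+1, k,l≥1} [γ_k, γ_l] ∈ g^{(n+1)}`.  Then:
(1) `∂^{γ₀}(γ̃_{n+1}) = 0`, i.e. `γ̃_{n+1}` is a degree `−2` cycle in
`(g^{(n+1)}, ∂^{γ₀})`;
(2) there exists `γ_{n+1} ∈ g^{(n+1)}` such that `γ₀ + γ₁ + ⋯ + γ_{n+1}`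
satisfies the equations `(MC_k)` up to `k = n+1` if and only if the class of
`γ̃_{n+1}` in `H_{−2}(g^{(n+1)}, ∂^{γ₀})` vanishes. -/
theorem obstruction_theory_weight_graded_dgLie (K : Type) [Field K] [CharZero K]
    (L : WtDGLie K) (n : ℕ) (γ : ∀ k, L.X k (-1))
    (hMC0 : L.MCzero γ) (hMC : ∀ m, m < n → L.MCsucc γ m) :
    L.twd (γ 0) (n + 1) (-2) (L.obstruction γ n) = 0 ∧
    ((∃ g : L.X (n + 1) (-1),
        L.MCzero (Function.update γ (n + 1) g) ∧
        (∀ m, m < n → L.MCsucc (Function.update γ (n + 1) g) m) ∧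
        L.MCsucc (Function.update γ (n + 1) g) n) ↔
      ∃ y : L.X (n + 1) (-1),
        wdegCast (K := K) (X := L.X) rfl (show (-1 : ℤ) - 1 = -2 by omega)
          (L.twd (γ 0) (n + 1) (-1) y) = L.obstruction γ n) := by
  refine ⟨L.twd_obstruction γ n hMC0 hMC, ?_⟩
  have hag : ∀ g : L.X (n + 1) (-1), ∀ k ≤ n, Function.update γ (n + 1) g k = γ k :=
    fun g k hk => Function.update_of_ne (by omega) _ _
  -- The equations of weight at most `n` do not involve `γ_{n+1}`.
  have hlow0 : ∀ g : L.X (n + 1) (-1), L.MCzero (Function.update γ (n + 1) g) := by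
    intro g
    rw [L.MCzero_iff, L.curv_congr fun j hj => hag g j (by omega)]
    exact (L.MCzero_iff γ).mp hMC0
  have hlow : ∀ g : L.X (n + 1) (-1), ∀ m, m < n →
      L.MCsucc (Function.update γ (n + 1) g) m := by
    intro g m hm
    rw [L.MCsucc_iff, L.curv_congr fun j hj => hag g j (by omega)]
    exact (L.MCsucc_iff γ m).mp (hMC m hm)
  -- The equation of weight `n + 1` says `∂^{γ₀}(g) = -γ̃_{n+1}`.
  have htop : ∀ g : L.X (n + 1) (-1), L.MCsucc (Function.update γ (n + 1) g) n ↔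
      L.incl (n + 1) (-1 - 1) (L.twd (γ 0) (n + 1) (-1) g)
        + L.incl (n + 1) (-2) (L.obstruction γ n) = 0 := by
    intro g
    rw [L.MCsucc_iff, L.curv_eq_twd_add_obstruction, L.obstruction_congr (hag g),
      hag g 0 (Nat.zero_le n), Function.update_self]
  have hbd : ∀ y : L.X (n + 1) (-1),
      wdegCast (K := K) (X := L.X) rfl (show (-1 : ℤ) - 1 = -2 by omega)
          (L.twd (γ 0) (n + 1) (-1) y) = L.obstruction γ n ↔
        L.incl (n + 1) (-1 - 1) (L.twd (γ 0) (n + 1) (-1) y)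
          = L.incl (n + 1) (-2) (L.obstruction γ n) := by
    intro y
    rw [← (L.incl_injective (n + 1) (-2)).eq_iff, WtDGLie.incl_cast]
  have hneg : ∀ g : L.X (n + 1) (-1), L.incl (n + 1) (-1 - 1) (L.twd (γ 0) (n + 1) (-1) (-g))
      = -L.incl (n + 1) (-1 - 1) (L.twd (γ 0) (n + 1) (-1) g) := by
    intro g
    simp only [WtDGLie.incl_twd, map_neg]
    abel
  constructor
  · rintro ⟨g, -, -, hg⟩
    refine ⟨-g, ?_⟩
    rw [hbd, hneg, neg_eq_iff_add_eq_zero]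
    exact (htop g).mp hg
  · rintro ⟨y, hy⟩
    refine ⟨-y, hlow0 _, hlow _, ?_⟩
    rw [htop, hneg, (hbd y).mp hy, neg_add_cancel]
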